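/- Suppose d is a metric on S such that for every i ∈ I and every continuous map γ : [0,1] → D one has L(γ, d[l^{(i)}]) = L(σᵢ ∘ γ, d). Then d(x,y) ≤ d[l](x,y) for all x, y ∈ S. -/

import Mathlib

noncomputable section

open Set
open scoped ENNReal

/-- The Euclidean plane `ℝ²` with the Euclidean metric. -/
abbrev E2 : Type := EuclideanSpace ℝ (Fin 2)

/-- Vertices of the fixed closed regular (equilateral) triangle of side length 1. -/
def p0 : E2 := !₂[0, 0]
def p1 : E2 := !₂[1, 0]
def p2 : E2 := !₂[1 / 2, Real.sqrt 3 / 2]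

/-- `Dtri` is the fixed closed regular triangle in `ℝ²` with edge length 1. -/
def Dtri : Set E2 := convexHull ℝ {p0, p1, p2}

/-- `V0` is the set of the three vertices of `Dtri`. -/
def V0 : Set E2 := {p0, p1, p2}

/-- The three closed edges of `Dtri`. -/
def e01 : Set E2 := segment ℝ p0 p1
def e12 : Set E2 := segment ℝ p1 p2
def e02 : Set E2 := segment ℝ p0 p2

/-- `E0` is the set of the three closed edges of `Dtri`. -/
def E0 : Set (Set E2) := {e01, e12, e02}

/-- The open edge `e° = e ∖ V₀`. -/
def eo (e : Set E2) : Set E2 := e \ V0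

/-- `Do = D°` is the interior of `Dtri` in `ℝ²`. -/
def Do : Set E2 := interior Dtri

/-- `l : E₀ → ℝ` is positive and satisfies the strict triangle inequalities:
`l e₁ + l e₂ > l e₃` whenever `{e₁, e₂, e₃} = E₀`. -/
def TriIneq (l : Set E2 → ℝ) : Prop :=
  (∀ e ∈ E0, 0 < l e) ∧
  ∀ e₁ e₂ e₃ : Set E2, ({e₁, e₂, e₃} : Set (Set E2)) = E0 → l e₁ + l e₂ > l e₃

/-- A linear map `f : ℝ² → ℝ²` realizes the edge lengths `l`, i.e. for each `e ∈ E₀`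
the segment `f(e)` has Euclidean length `l e`. -/
def Realizes (f : E2 →ₗ[ℝ] E2) (l : Set E2 → ℝ) : Prop :=
  dist (f p0) (f p1) = l e01 ∧ dist (f p1) (f p2) = l e12 ∧ dist (f p0) (f p2) = l e02

/-- The metric `d[l]` on `Dtri`, defined by `d[l](x,y) = |f x - f y|₂` for a linear map `f`
realizing the edge lengths `l` (this is independent of the choice of `f`). -/
def dD (l : Set E2 → ℝ) (x y : E2) : ℝ :=
  letI := Classical.propDecidable (∃ f : E2 →ₗ[ℝ] E2, Realizes f l)
  if h : ∃ f : E2 →ₗ[ℝ] E2, Realizes f l then dist (h.choose x) (h.choose y) else 0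

/-- A triangulation `T = (σᵢ)_{i ∈ I}`, `I = Fin n`, of a topological space `S`:
a finite family of continuous maps `σᵢ : Dtri → S` such that
(a) `σᵢ` is injective on each open edge, (b) `σᵢ` is injective on `D°`,
(c) `S` is the disjoint union of `⋃ᵢ σᵢ(V₀)`, the sets `σᵢ(D°)`, and the distinct sets
among the `σᵢ(e°)`, and (d) glued edges are identified by a linear homeomorphism. -/
structure Triangulation (S : Type) [TopologicalSpace S] (n : ℕ) where
  σ : Fin n → E2 → S
  continuousOn : ∀ i, ContinuousOn (σ i) Dtri
  inj_edge : ∀ i, ∀ e ∈ E0, InjOn (σ i) (eo e)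
  inj_int : ∀ i, InjOn (σ i) Do
  cover : (⋃ i, σ i '' V0) ∪ (⋃ i, σ i '' Do) ∪ (⋃ i, ⋃ e ∈ E0, σ i '' eo e) = univ
  disj_int : ∀ i j, i ≠ j → Disjoint (σ i '' Do) (σ j '' Do)
  disj_vert_int : ∀ j, Disjoint (⋃ i, σ i '' V0) (σ j '' Do)
  disj_vert_edge : ∀ j, ∀ e ∈ E0, Disjoint (⋃ i, σ i '' V0) (σ j '' eo e)
  disj_int_edge : ∀ i j, ∀ e ∈ E0, Disjoint (σ i '' Do) (σ j '' eo e)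
  edge_eq_or_disjoint : ∀ i j, ∀ e ∈ E0, ∀ e' ∈ E0,
    σ i '' eo e = σ j '' eo e' ∨ Disjoint (σ i '' eo e) (σ j '' eo e')
  glue : ∀ i j, ∀ e ∈ E0, ∀ e' ∈ E0, σ i '' eo e = σ j '' eo e' →
    ∃ A : E2 →ᵃ[ℝ] E2, A '' e = e' ∧ ∀ x ∈ e, σ j (A x) = σ i x

variable {S : Type} [TopologicalSpace S] {n : ℕ}

/-- `l ∈ ℝ^{E(T)}_Δ`: `l` assigns positive lengths to the edges of `T` satisfying the
strict triangle inequalities in each triangle. -/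
def TriIneqT (T : Triangulation S n) (l : Set S → ℝ) : Prop :=
  (∀ (i : Fin n), ∀ e ∈ E0, 0 < l (T.σ i '' e)) ∧
  ∀ (i : Fin n), ∀ e₁ e₂ e₃ : Set E2, ({e₁, e₂, e₃} : Set (Set E2)) = E0 →
    l (T.σ i '' e₁) + l (T.σ i '' e₂) > l (T.σ i '' e₃)

/-- The restricted edge lengths `l^{(i)}` on the triangle `σᵢ(D)`: `l^{(i)}_e = l_{σᵢ(e)}`. -/
def lRes (T : Triangulation S n) (l : Set S → ℝ) (i : Fin n) : Set E2 → ℝ :=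
  fun e => l (T.σ i '' e)

/-- `dᵢ(x,y) = min { d[l^{(i)}](x',y') : x' ∈ σᵢ⁻¹(x), y' ∈ σᵢ⁻¹(y) }` for `x, y ∈ σᵢ(D)`. -/
def dTri (T : Triangulation S n) (l : Set S → ℝ) (i : Fin n) (x y : S) : ℝ :=
  sInf { r | ∃ x' ∈ Dtri, ∃ y' ∈ Dtri,
    T.σ i x' = x ∧ T.σ i y' = y ∧ r = dD (lRes T l i) x' y' }

/-- The set of sums `Σ_j d_{i_j}(x_{j-1}, x_j)` over chains from `x` to `y`. -/
def chainSums (T : Triangulation S n) (l : Set S → ℝ) (x y : S) : Set ℝ :=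
  { r | ∃ (k : ℕ) (c : ℕ → S) (idx : ℕ → Fin n),
      c 0 = x ∧ c k = y ∧
      (∀ j < k, c j ∈ T.σ (idx j) '' Dtri ∧ c (j + 1) ∈ T.σ (idx j) '' Dtri) ∧
      r = ∑ j ∈ Finset.range k, dTri T l (idx j) (c j) (c (j + 1)) }

/-- The glued metric `d[l]` on `S`. -/
def dGlue (T : Triangulation S n) (l : Set S → ℝ) (x y : S) : ℝ :=
  sInf (chainSums T l x y)

/-- The length `L(γ, d)` of a curve `γ : [0,1] → X` with respect to a metric `d`:
`L(γ,d) = sup { Σ_j d(γ t_{j-1}, γ t_j) : 0 = t₀ < t₁ < ... < t_k = 1 }`, valued in `[0,∞]`. -/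
def pathLen {X : Type} (d : X → X → ℝ) (γ : ℝ → X) : ℝ≥0∞ :=
  ⨆ (k : ℕ) (t : Fin (k + 1) → ℝ) (_ : StrictMono t ∧ t 0 = 0 ∧ t (Fin.last k) = 1),
    ENNReal.ofReal (∑ j : Fin k, d (γ (t j.castSucc)) (γ (t j.succ)))

/-! `σᵢ` carries the straight segment from `a` to `b` in `D` to a path whose `d`-length is the
`d[l⁽ⁱ⁾]`-length of the segment, namely `d[l⁽ⁱ⁾](a, b)`. As no path is shorter than the distance
between its endpoints, `d ≤ dᵢ` on each `σᵢ(D)`, and the triangle inequality for `d` propagates this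
bound along chains. The infimum defining `d[l]` is taken over a nonempty set of chains because `S`
is connected and the finitely many `σᵢ(D)` are closed. -/

lemma ofReal_le_pathLen {X : Type} (d : X → X → ℝ) (γ : ℝ → X) :
    ENNReal.ofReal (d (γ 0) (γ 1)) ≤ pathLen d γ := by
  have hpartition : StrictMono (![0, 1] : Fin 2 → ℝ) ∧
      (![0, 1] : Fin 2 → ℝ) 0 = 0 ∧ (![0, 1] : Fin 2 → ℝ) (Fin.last 1) = 1 :=
    ⟨Fin.strictMono_iff_lt_succ.2 (by simp), rfl, rfl⟩
  refine le_trans ?_ (le_iSup₂_of_le 1 ![0, 1] (le_iSup_of_le hpartition le_rfl))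
  simp

lemma pathLen_le_of_forall_le_mul {X : Type} {d : X → X → ℝ} {γ : ℝ → X} {K : ℝ}
    (h : ∀ s ∈ Icc (0 : ℝ) 1, ∀ t ∈ Icc (0 : ℝ) 1, s ≤ t → d (γ s) (γ t) ≤ K * (t - s)) :
    pathLen d γ ≤ ENNReal.ofReal K := by
  refine iSup_le fun k => iSup₂_le fun t ht => ENNReal.ofReal_le_ofReal ?_
  obtain ⟨hmono, hzero, hlast⟩ := ht
  have hmem (j : Fin (k + 1)) : t j ∈ Icc (0 : ℝ) 1 :=
    ⟨hzero ▸ hmono.monotone (Fin.zero_le j), hlast ▸ hmono.monotone (Fin.le_last j)⟩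
  have htelescope : ∑ j : Fin k, (t j.succ - t j.castSucc) = 1 := by
    rw [Finset.sum_sub_distrib]
    linarith [Fin.sum_univ_succ t, Fin.sum_univ_castSucc t]
  calc ∑ j : Fin k, d (γ (t j.castSucc)) (γ (t j.succ))
      ≤ ∑ j : Fin k, K * (t j.succ - t j.castSucc) :=
        Finset.sum_le_sum fun j _ =>
          h _ (hmem _) _ (hmem _) (hmono.monotone j.castSucc_lt_succ.le)
    _ = K := by rw [← Finset.mul_sum, htelescope, mul_one]

lemma convex_Dtri : Convex ℝ Dtri := convex_convexHull ℝ _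

lemma isCompact_Dtri : IsCompact Dtri :=
  (toFinite {p0, p1, p2}).isCompact_convexHull (𝕜 := ℝ)

lemma V0_subset_Dtri : V0 ⊆ Dtri := subset_convexHull ℝ _

lemma subset_Dtri_of_mem_E0 {e : Set E2} (he : e ∈ E0) : e ⊆ Dtri := by
  have h0 : p0 ∈ Dtri := V0_subset_Dtri (by simp [V0])
  have h1 : p1 ∈ Dtri := V0_subset_Dtri (by simp [V0])
  have h2 : p2 ∈ Dtri := V0_subset_Dtri (by simp [V0])
  rcases he with rfl | rfl | rfl
  · exact convex_Dtri.segment_subset h0 h1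
  · exact convex_Dtri.segment_subset h1 h2
  · exact convex_Dtri.segment_subset h0 h2

lemma exists_linearMap_dD_eq_dist (l : Set E2 → ℝ) :
    ∃ f : E2 →ₗ[ℝ] E2, ∀ x y, dD l x y = dist (f x) (f y) := by
  by_cases h : ∃ f : E2 →ₗ[ℝ] E2, Realizes f l
  · exact ⟨h.choose, fun x y => dif_pos h⟩
  · -- Here `dD l` takes its junk value `0`.
    exact ⟨0, fun x y => (dif_neg h).trans (dist_self _).symm⟩

lemma dD_nonneg (l : Set E2 → ℝ) (x y : E2) : 0 ≤ dD l x y := by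
  obtain ⟨f, hf⟩ := exists_linearMap_dD_eq_dist l
  exact hf x y ▸ dist_nonneg

lemma dD_lineMap_lineMap (l : Set E2 → ℝ) (x y : E2) (s t : ℝ) :
    dD l (AffineMap.lineMap x y s) (AffineMap.lineMap x y t) = dist s t * dD l x y := by
  obtain ⟨f, hf⟩ := exists_linearMap_dD_eq_dist l
  have hline (r : ℝ) : f (AffineMap.lineMap x y r) = AffineMap.lineMap (f x) (f y) r :=
    f.toAffineMap.apply_lineMap x y r
  rw [hf, hf, hline, hline, dist_lineMap_lineMap]

lemma pathLen_dD_lineMap (l : Set E2 → ℝ) (x y : E2) :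
    pathLen (dD l) (AffineMap.lineMap x y) = ENNReal.ofReal (dD l x y) := by
  apply le_antisymm
  · refine pathLen_le_of_forall_le_mul fun s _ t _ hst => ?_
    rw [dD_lineMap_lineMap, dist_comm, Real.dist_eq, abs_of_nonneg (sub_nonneg.2 hst), mul_comm]
  · simpa only [AffineMap.lineMap_apply_zero, AffineMap.lineMap_apply_one] using
      ofReal_le_pathLen (dD l) (AffineMap.lineMap x y)

lemma le_dD_of_pathLen_lineMap_le {X : Type} {d : X → X → ℝ} {σ : E2 → X} {l : Set E2 → ℝ}
    {x y : E2} (h : pathLen d (σ ∘ AffineMap.lineMap x y) ≤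
      pathLen (dD l) (AffineMap.lineMap x y)) :
    d (σ x) (σ y) ≤ dD l x y := by
  rw [← ENNReal.ofReal_le_ofReal_iff (dD_nonneg l x y)]
  calc ENNReal.ofReal (d (σ x) (σ y))
      ≤ pathLen d (σ ∘ AffineMap.lineMap x y) := by
        simpa only [Function.comp_apply, AffineMap.lineMap_apply_zero,
          AffineMap.lineMap_apply_one] using ofReal_le_pathLen d (σ ∘ AffineMap.lineMap x y)
    _ ≤ pathLen (dD l) (AffineMap.lineMap x y) := h
    _ = ENNReal.ofReal (dD l x y) := pathLen_dD_lineMap l x y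

lemma reflTransGen_of_iUnion_isClosed_eq_univ {X ι : Type*} [TopologicalSpace X]
    [PreconnectedSpace X] {A : ι → Set X} (hfin : LocallyFinite A) (hclosed : ∀ i, IsClosed (A i))
    (hcover : ⋃ i, A i = univ) (x y : X) :
    Relation.ReflTransGen (fun a b => ∃ i, a ∈ A i ∧ b ∈ A i) x y := by
  have : Std.Symm fun a b => ∃ i, a ∈ A i ∧ b ∈ A i := ⟨fun _ _ ⟨i, ha, hb⟩ => ⟨i, hb, ha⟩⟩
  refine PreconnectedSpace.induction₂ _ (fun a => ?_) inferInstance x y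
  filter_upwards [hfin.iInter_compl_mem_nhds hclosed a] with b hb
  obtain ⟨i, hbi⟩ := iUnion_eq_univ_iff.1 hcover b
  have hai : a ∈ A i := by_contra fun hai => mem_iInter₂.1 hb i hai hbi
  exact .single ⟨i, hai, hbi⟩

lemma le_sum_range_of_triangle {X M : Type*} [AddCommMonoid M] [PartialOrder M]
    [IsOrderedAddMonoid M] {d : X → X → M} (hd_self : ∀ x, d x x = 0)
    (hd_tri : ∀ x y z, d x z ≤ d x y + d y z) (c : ℕ → X) (k : ℕ) :
    d (c 0) (c k) ≤ ∑ j ∈ Finset.range k, d (c j) (c (j + 1)) := by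
  induction k with
  | zero => simp [hd_self]
  | succ k ih =>
    rw [Finset.sum_range_succ]
    exact (hd_tri _ (c k) _).trans (by gcongr)

lemma iUnion_image_Dtri (T : Triangulation S n) : ⋃ i, T.σ i '' Dtri = univ := by
  refine univ_subset_iff.1 (T.cover ▸ union_subset (union_subset ?_ ?_) ?_)
  · exact iUnion_mono fun i => image_mono V0_subset_Dtri
  · exact iUnion_mono fun i => image_mono interior_subset
  · exact iUnion_mono fun i => iUnion₂_subset fun e he =>
      image_mono (sdiff_subset.trans (subset_Dtri_of_mem_E0 he))

lemma isClosed_image_Dtri [T2Space S] (T : Triangulation S n) (i : Fin n) :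
    IsClosed (T.σ i '' Dtri) :=
  (isCompact_Dtri.image_of_continuousOn (T.continuousOn i)).isClosed

lemma zero_mem_chainSums (T : Triangulation S n) (l : Set S → ℝ) (x : S) :
    0 ∈ chainSums T l x x := by
  obtain ⟨i, -⟩ := iUnion_eq_univ_iff.1 (iUnion_image_Dtri T) x
  exact ⟨0, fun _ => x, fun _ => i, rfl, rfl, by simp, by simp⟩

lemma add_dTri_mem_chainSums {T : Triangulation S n} {l : Set S → ℝ} {x y z : S} {i : Fin n}
    {r : ℝ} (hr : r ∈ chainSums T l x y) (hy : y ∈ T.σ i '' Dtri) (hz : z ∈ T.σ i '' Dtri) :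
    r + dTri T l i y z ∈ chainSums T l x z := by
  obtain ⟨k, c, idx, rfl, rfl, hc, rfl⟩ := hr
  let c' : ℕ → S := Function.update c (k + 1) z
  let idx' : ℕ → Fin n := Function.update idx k i
  have hc'_le {j : ℕ} (hj : j ≤ k) : c' j = c j := Function.update_of_ne (by omega) _ _
  have hc'_last : c' (k + 1) = z := Function.update_self ..
  have hidx'_lt {j : ℕ} (hj : j < k) : idx' j = idx j := Function.update_of_ne hj.ne _ _
  have hidx'_last : idx' k = i := Function.update_self ..
  refine ⟨k + 1, c', idx', hc'_le k.zero_le, hc'_last, fun j hj => ?_, ?_⟩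
  · obtain hj | rfl := Nat.lt_succ_iff_lt_or_eq.1 hj
    · rw [hc'_le hj.le, hc'_le hj, hidx'_lt hj]
      exact hc j hj
    · rw [hc'_le le_rfl, hc'_last, hidx'_last]
      exact ⟨hy, hz⟩
  · rw [Finset.sum_range_succ, hc'_le le_rfl, hc'_last, hidx'_last]
    congr 1
    refine Finset.sum_congr rfl fun j hj => ?_
    have hj := Finset.mem_range.1 hj
    rw [hc'_le hj.le, hc'_le hj, hidx'_lt hj]

lemma chainSums_nonempty [T2Space S] [PreconnectedSpace S] (T : Triangulation S n)
    (l : Set S → ℝ) (x y : S) : (chainSums T l x y).Nonempty := by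
  have hchain := reflTransGen_of_iUnion_isClosed_eq_univ (locallyFinite_of_finite _)
    (isClosed_image_Dtri T) (iUnion_image_Dtri T) x y
  induction hchain with
  | refl => exact ⟨0, zero_mem_chainSums T l x⟩
  | tail _ hstep ih =>
    obtain ⟨r, hr⟩ := ih
    obtain ⟨i, hy, hz⟩ := hstep
    exact ⟨_, add_dTri_mem_chainSums hr hy hz⟩

lemma le_dTri {T : Triangulation S n} {l : Set S → ℝ} {i : Fin n} {x y : S} {a : ℝ}
    (hx : x ∈ T.σ i '' Dtri) (hy : y ∈ T.σ i '' Dtri)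
    (h : ∀ x' ∈ Dtri, ∀ y' ∈ Dtri, T.σ i x' = x → T.σ i y' = y → a ≤ dD (lRes T l i) x' y') :
    a ≤ dTri T l i x y := by
  obtain ⟨x', hx', hσx'⟩ := hx
  obtain ⟨y', hy', hσy'⟩ := hy
  refine le_csInf ⟨_, x', hx', y', hy', hσx', hσy', rfl⟩ ?_
  rintro _ ⟨x', hx', y', hy', hσx', hσy', rfl⟩
  exact h x' hx' y' hy' hσx' hσy'

lemma le_dGlue [T2Space S] [PreconnectedSpace S] {T : Triangulation S n} {l : Set S → ℝ}
    {d : S → S → ℝ} (hd_self : ∀ x, d x x = 0) (hd_tri : ∀ x y z, d x z ≤ d x y + d y z)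
    (hd_le : ∀ i, ∀ x ∈ T.σ i '' Dtri, ∀ y ∈ T.σ i '' Dtri, d x y ≤ dTri T l i x y) (x y : S) :
    d x y ≤ dGlue T l x y := by
  refine le_csInf (chainSums_nonempty T l x y) ?_
  rintro _ ⟨k, c, idx, rfl, rfl, hc, rfl⟩
  calc d (c 0) (c k)
      ≤ ∑ j ∈ Finset.range k, d (c j) (c (j + 1)) := le_sum_range_of_triangle hd_self hd_tri c k
    _ ≤ ∑ j ∈ Finset.range k, dTri T l (idx j) (c j) (c (j + 1)) :=
        Finset.sum_le_sum fun j hj =>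
          have hmem := hc j (Finset.mem_range.1 hj)
          hd_le (idx j) _ hmem.1 _ hmem.2

theorem le_dGlue_of_length_preserving_general [T2Space S] [PreconnectedSpace S]
    (T : Triangulation S n) (l : Set S → ℝ) (hl : TriIneqT T l) (d : S → S → ℝ)
    (hd_self : ∀ x, d x x = 0) (hd_tri : ∀ x y z, d x z ≤ d x y + d y z)
    (hL : ∀ i, ∀ x ∈ Dtri, ∀ y ∈ Dtri, pathLen d (T.σ i ∘ AffineMap.lineMap x y) ≤
      pathLen (dD (lRes T l i)) (AffineMap.lineMap x y)) (x y : S) :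
    d x y ≤ dGlue T l x y := by
  refine le_dGlue hd_self hd_tri (fun i _ hx _ hy => le_dTri hx hy ?_) x y
  rintro a ha b hb rfl rfl
  exact le_dD_of_pathLen_lineMap_le (hL i a ha b hb)

/-- if `d` is a metric on `S` such that for every `i ∈ I` and every
continuous curve `γ : [0,1] → Dtri` one has `L(γ, d[l^{(i)}]) = L(σᵢ ∘ γ, d)`, then
`d(x,y) ≤ d[l](x,y)` for all `x, y ∈ S`. -/
theorem le_dGlue_of_length_preserving
    {S : Type} [TopologicalSpace S] [CompactSpace S] [T2Space S] [ConnectedSpace S]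
    {n : ℕ} (T : Triangulation S n) (l : Set S → ℝ) (hl : TriIneqT T l)
    (d : S → S → ℝ)
    (hd_eq : ∀ x y : S, d x y = 0 ↔ x = y)
    (hd_symm : ∀ x y : S, d x y = d y x)
    (hd_tri : ∀ x y z : S, d x z ≤ d x y + d y z)
    (hL : ∀ i : Fin n, ∀ γ : ℝ → E2,
      ContinuousOn γ (Icc (0:ℝ) 1) → (∀ t ∈ Icc (0:ℝ) 1, γ t ∈ Dtri) →
      pathLen (dD (lRes T l i)) γ = pathLen d (T.σ i ∘ γ)) :
    ∀ x y : S, d x y ≤ dGlue T l x y :=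
  le_dGlue_of_length_preserving_general T l hl d (fun x => (hd_eq x x).2 rfl) hd_tri
    fun i _ hx _ hy => (hL i _ AffineMap.lineMap_continuous.continuousOn
      fun _ ht => convex_Dtri.lineMap_mem hx hy ht).ge
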